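/- For any n ≥ 1 and 1 ≤ k ≤ n, the number of n-element subsets of no interest aside: the number of (k−1)-element subsets of {1,…,n−1} whose elements sum to 1 modulo n equals the number of cyclic V-shaped permutations of {1,…,n} whose minimum is in position k. -/

import Mathlib

open Finset

/-- Number of ones in a cyclic binary word of length `n`. -/
noncomputable def onesCount (n : ℕ) (w : ZMod n → Bool) : ℕ :=
  Nat.card {i : ZMod n // w i = true}

/-- The co-period of a cyclic binary word `w` of length `n`: the size of its
stabilizer under cyclic rotation (equivalently, the `j` such that `w = v^j`
with `v` primitive). -/
noncomputable def coPeriod (n : ℕ) (w : ZMod n → Bool) : ℕ :=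
  Nat.card {t : ZMod n // ∀ i, w (i + t) = w i}

/-- Two cyclic words are related iff they are cyclic rotations of each other. -/
def rotRel (n : ℕ) (u v : ZMod n → Bool) : Prop :=
  ∃ t : ZMod n, ∀ i, u i = v (i + t)

theorem rotRel_equivalence (n : ℕ) : Equivalence (rotRel n) := by
  constructor
  · exact fun u => ⟨0, fun i => by rw [add_zero]⟩
  · rintro u v ⟨t, h⟩
    exact ⟨-t, fun i => by rw [h, neg_add_cancel_right]⟩
  · rintro u v w ⟨t1, h1⟩ ⟨t2, h2⟩
    exact ⟨t1 + t2, fun i => by rw [h1, h2, ← add_assoc]⟩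

def rotSetoid (n : ℕ) : Setoid (ZMod n → Bool) := ⟨rotRel n, rotRel_equivalence n⟩

/-- The number of binary necklaces of length `n` with `k` ones. -/
noncomputable def NCard (n k : ℕ) : ℕ :=
  Nat.card (Quotient (Setoid.comap
    (Subtype.val : {w : ZMod n → Bool // onesCount n w = k} → _) (rotSetoid n)))

/-- The number of binary necklaces of length `n` with `k` ones whose co-period divides `r`. -/
noncomputable def NrCard (n k r : ℕ) : ℕ :=
  Nat.card (Quotient (Setoid.comap
    (Subtype.val : {w : ZMod n → Bool // onesCount n w = k ∧ coPeriod n w ∣ r} → _)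
    (rotSetoid n)))

/-- The number of `k`-element subsets of `{1,…,n}` whose elements sum to `r` mod `n`. -/
def SbarCard (n k r : ℕ) : ℕ :=
  ((Finset.Icc 1 n).powerset.filter
    (fun A => A.card = k ∧ (∑ a ∈ A, a) % n = r)).card

/-- The number of `k`-element subsets of `{1,…,n-1}` whose elements sum to `r` mod `n`. -/
def SCard (n k r : ℕ) : ℕ :=
  ((Finset.Icc 1 (n - 1)).powerset.filter
    (fun A => A.card = k ∧ (∑ a ∈ A, a) % n = r)).card

/-- The Ramanujan sum `c_d(r) = ∑_{j ∣ gcd(r,d)} j · μ(d/j)`. -/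
def ramanujanSum (d : ℕ) (r : ℤ) : ℤ :=
  ∑ j ∈ (Int.gcd r d).divisors, (j : ℤ) * ArithmeticFunction.moebius (d / j)

/-- `σ` (in one-line notation `σ 0, σ 1, …, σ (n-1)`, i.e. position `i+1` holds
`σ i`) is V-shaped with its minimum in position `k` (1-based). -/
def IsVShapedAt (n k : ℕ) (σ : Equiv.Perm (Fin n)) : Prop :=
  (∀ i j : Fin n, i < j → (j : ℕ) + 1 ≤ k → σ j < σ i) ∧
  (∀ i j : Fin n, i < j → k ≤ (i : ℕ) + 1 → σ i < σ j)

/-- `σ` consists of a single cycle. -/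
def IsCyclicPerm (n : ℕ) (σ : Equiv.Perm (Fin n)) : Prop :=
  ∀ x y : Fin n, σ.SameCycle x y

/-!
Expand `∏ₐ (1 + ζ^(ta) X) = (1 - (-X)^d)^(n/d)`, where `ζ = exp (2πi/n)` and `d` is the additive
order of `t`. By Fourier inversion on `ZMod n`, `n` times the number of `j`-subsets `A` with sum `1`
becomes a sum, over pairs of a `j`-subset `A` and a translation `t` fixing `A`, of `ζ^(-t)` times
the sign of the permutation of `A` induced by `t`. For fixed `A` this sign is a character of the
stabilizer, so orthogonality leaves the order of the stabilizer if the character is injective, and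
`0` otherwise.

A cyclic permutation of `Fin n` with a base point is a ranking of `ZMod n`, the permutation becoming
`i ↦ i + 1`. If it decreases on the first `j` positions and increases on the others, let `A` be the
set of the `j` lowest ranked elements. Following `i` and `k` around the cycle until exactly one of
them lies in `A` determines their order, with one reversal for each earlier visit to `A`. So `A`
determines the ranking up to its stabilizer, and admits one exactly when the sign character is
injective: the two counts agree.

Finally, a subset either contains `0` or not, and a permutation decreasing on the first `j`
positions and increasing on the others is V-shaped with minimum in position `j` or `j + 1`, if
`1 ≤ j < n`. The theorem follows by induction on `k`.
-/

section InvariantSubsets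

open scoped Pointwise

variable {G : Type*} [AddCommGroup G]

theorem card_filter_mk_mem [Fintype G] (H : AddSubgroup G) [DecidableEq (G ⧸ H)]
    (B : Finset (G ⧸ H)) : #{a : G | (a : G ⧸ H) ∈ B} = Nat.card H * #B := by
  have e := Nat.card_congr (QuotientAddGroup.preimageMkEquivAddSubgroupProdSet H (B : Set (G ⧸ H)))
  rw [Nat.card_prod, Nat.card_coe_set_eq, Nat.card_coe_set_eq, Set.ncard_coe_finset] at e
  rw [← e, ← Set.ncard_coe_finset]
  congr
  ext a
  simp

theorem mem_iff_mem_of_sub_mem_stabilizer [DecidableEq G] {A : Finset G} {a b : G}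
    (h : b - a ∈ AddAction.stabilizer G A) : b ∈ A ↔ a ∈ A := by
  simpa using AddAction.mem_stabilizer_finset.1 h a

theorem sum_invariant_card [Fintype G] [DecidableEq G] {M : Type*} [AddCommMonoid M] (t : G)
    [Fintype (G ⧸ AddSubgroup.zmultiples t)] (f : ℕ → M) :
    ∑ A : Finset G with t ∈ AddAction.stabilizer G A, f #A =
      ∑ B : Finset (G ⧸ AddSubgroup.zmultiples t), f (addOrderOf t * #B) := by
  classical
  symm
  refine sum_bij' (fun B _ ↦ univ.filter fun a : G ↦ (a : G ⧸ AddSubgroup.zmultiples t) ∈ B)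
    (fun A _ ↦ A.image (QuotientAddGroup.mk : G → G ⧸ AddSubgroup.zmultiples t))
    ?_ (fun _ _ ↦ mem_univ _) ?_ ?_ ?_
  · intro B _
    have hmk (a : G) : ((t + a : G) : G ⧸ AddSubgroup.zmultiples t) = a :=
      QuotientAddGroup.eq.2 (by simp)
    simp only [mem_filter, mem_univ, true_and, AddAction.mem_stabilizer_finset, vadd_eq_add, hmk,
      implies_true]
  · intro B _
    ext q
    obtain ⟨a, rfl⟩ := QuotientAddGroup.mk_surjective q
    simp only [mem_image, mem_filter, mem_univ, true_and]
    exact ⟨fun ⟨_, hb, hba⟩ ↦ hba ▸ hb, fun h ↦ ⟨a, h, rfl⟩⟩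
  · intro A hA
    ext a
    simp only [mem_filter, mem_univ, true_and, mem_image] at hA ⊢
    refine ⟨fun ⟨b, hb, hba⟩ ↦ (mem_iff_mem_of_sub_mem_stabilizer ?_).2 hb, fun h ↦ ⟨a, h, rfl⟩⟩
    refine AddSubgroup.zmultiples_le.2 hA ?_
    simpa [sub_eq_neg_add] using QuotientAddGroup.eq.1 hba
  · intro B _
    rw [card_filter_mk_mem, Nat.card_zmultiples]

end InvariantSubsets

section CharacterSums

open scoped Pointwise

open Polynomial

@[to_additive]
theorem prod_zmod_val {n : ℕ} [NeZero n] {M : Type*} [CommMonoid M] (f : ℕ → M) :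
    ∏ a : ZMod n, f a.val = ∏ i ∈ range n, f i := by
  obtain ⟨m, rfl⟩ := Nat.exists_eq_succ_of_ne_zero (NeZero.ne n)
  exact Fin.prod_univ_eq_prod_range f (m + 1)

theorem prod_range_mul_of_periodic {M : Type*} [CommMonoid M] {f : ℕ → M} {d : ℕ}
    (hf : Function.Periodic f d) (q : ℕ) :
    ∏ i ∈ range (d * q), f i = (∏ i ∈ range d, f i) ^ q := by
  induction q with
  | zero => simp
  | succ q ih =>
    rw [Nat.mul_succ, add_comm, prod_range_add, pow_succ', ← ih]
    refine congrArg _ (prod_congr rfl fun i _ ↦ ?_)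
    rw [add_comm, hf]

theorem prod_one_sub_pow_mul {R : Type*} [CommRing R] [IsDomain R] {η : R} {d : ℕ}
    (hd : 0 < d) (hη : IsPrimitiveRoot η d) (x : R) :
    ∏ i ∈ range d, (1 - η ^ i * x) = 1 - x ^ d := by
  simpa [eval_prod] using (congrArg (eval 1) (X_pow_sub_C_eq_prod hη hd (α := x) rfl)).symm

theorem addChar_sum_eq_prod {G M ι : Type*} [AddCommGroup G] [CommMonoid M] (ψ : AddChar G M)
    (s : Finset ι) (f : ι → G) : ψ (∑ i ∈ s, f i) = ∏ i ∈ s, ψ (f i) :=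
  map_prod ψ.toMonoidHom (fun i ↦ Multiplicative.ofAdd (f i)) s

variable {n : ℕ} [NeZero n]

theorem isPrimitiveRoot_stdAddChar (t : ZMod n) :
    IsPrimitiveRoot (ZMod.stdAddChar t) (addOrderOf t) where
  pow_eq_one := by
    rw [← AddChar.map_nsmul_eq_pow, addOrderOf_nsmul_eq_zero, AddChar.map_zero_eq_one]
  dvd_of_pow_eq_one l hl := by
    rw [← AddChar.map_nsmul_eq_pow] at hl
    exact addOrderOf_dvd_of_nsmul_eq_zero
      (ZMod.injective_stdAddChar (hl.trans (AddChar.map_zero_eq_one _).symm))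

theorem prod_one_add_stdAddChar_mul_X (t : ZMod n) :
    ∏ a : ZMod n, (1 + C (ZMod.stdAddChar (t * a)) * X : ℂ[X]) =
      (1 - (-X) ^ addOrderOf t) ^ (n / addOrderOf t) := by
  have hη := isPrimitiveRoot_stdAddChar t
  have hdvd : addOrderOf t ∣ n := by simpa using addOrderOf_dvd_card (x := t)
  calc ∏ a : ZMod n, (1 + C (ZMod.stdAddChar (t * a)) * X : ℂ[X])
      = ∏ a : ZMod n, (1 - C (ZMod.stdAddChar t) ^ a.val * -X) := by
        refine prod_congr rfl fun a _ ↦ ?_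
        rw [← C_pow, ← AddChar.map_nsmul_eq_pow, nsmul_eq_mul, ZMod.natCast_zmod_val, mul_comm a]
        ring
    _ = ∏ i ∈ range (addOrderOf t * (n / addOrderOf t)), (1 - C (ZMod.stdAddChar t) ^ i * -X) := by
        rw [prod_zmod_val (fun i ↦ (1 - C (ZMod.stdAddChar t) ^ i * -X : ℂ[X])),
          Nat.mul_div_cancel' hdvd]
    _ = (1 - (-X) ^ addOrderOf t) ^ (n / addOrderOf t) := by
        rw [prod_range_mul_of_periodic,
          prod_one_sub_pow_mul (addOrderOf_pos t) (hη.map_of_injective C_injective)]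
        intro i
        beta_reduce
        rw [pow_add, (hη.map_of_injective C_injective).pow_eq_one, mul_one]

theorem sum_invariant_monomial (t : ZMod n) :
    ∑ A : Finset (ZMod n) with t ∈ AddAction.stabilizer (ZMod n) A,
        monomial #A ((-1) ^ (#A + #A / addOrderOf t) : ℂ) =
      (1 - (-X) ^ addOrderOf t) ^ (n / addOrderOf t) := by
  have : Fintype (ZMod n ⧸ AddSubgroup.zmultiples t) := Fintype.ofFinite _
  have hcard : Fintype.card (ZMod n ⧸ AddSubgroup.zmultiples t) = n / addOrderOf t := by
    have h := AddSubgroup.card_eq_card_quotient_mul_card_addSubgroup (AddSubgroup.zmultiples t)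
    rw [Nat.card_zmultiples, Nat.card_zmod, Nat.card_eq_fintype_card] at h
    exact (Nat.div_eq_of_eq_mul_left (addOrderOf_pos t) h).symm
  have hpow (q : ℕ) : monomial (addOrderOf t * q)
      ((-1) ^ (addOrderOf t * q + addOrderOf t * q / addOrderOf t) : ℂ) =
        (-(-X) ^ addOrderOf t) ^ q := by
    rw [Nat.mul_div_cancel_left _ (addOrderOf_pos t), ← C_mul_X_pow_eq_monomial, pow_add, pow_mul,
      pow_mul X, neg_pow ((-X : ℂ[X]) ^ _), neg_pow (X : ℂ[X]), mul_pow]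
    simp only [map_mul, map_pow, map_neg, map_one]
    ring
  rw [sum_invariant_card t fun m ↦ monomial m ((-1) ^ (m + m / addOrderOf t) : ℂ)]
  simp only [hpow]
  simpa [hcard, neg_add_eq_sub] using
    Fintype.sum_pow_mul_eq_add_pow (ZMod n ⧸ AddSubgroup.zmultiples t)
      (-(-X) ^ addOrderOf t : ℂ[X]) 1

theorem sum_stdAddChar_mul_sum (t : ZMod n) (j : ℕ) :
    ∑ A : Finset (ZMod n) with #A = j, ZMod.stdAddChar (t * ∑ a ∈ A, a) =
      ∑ A : Finset (ZMod n) with #A = j,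
        if t ∈ AddAction.stabilizer (ZMod n) A then (-1) ^ (#A + #A / addOrderOf t) else 0 := by
  have h := (prod_one_add_stdAddChar_mul_X t).trans (sum_invariant_monomial t).symm
  have hterm (A : Finset (ZMod n)) : ∏ a ∈ A, (C (ZMod.stdAddChar (t * a)) * X : ℂ[X]) =
      monomial #A (ZMod.stdAddChar (t * ∑ a ∈ A, a)) := by
    rw [prod_mul_distrib, prod_const, ← map_prod, C_mul_X_pow_eq_monomial, mul_sum,
      addChar_sum_eq_prod]
  rw [prod_one_add, powerset_univ, sum_congr rfl fun A _ ↦ hterm A] at h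
  have hcoeff := congrArg (coeff · j) h
  simp only [finsetSum_coeff, coeff_monomial] at hcoeff
  rw [← sum_filter, ← sum_filter, filter_comm, sum_filter (t ∈ AddAction.stabilizer _ ·)] at hcoeff
  exact hcoeff

theorem card_mul_card_sum_eq (j : ℕ) (r : ZMod n) :
    (n * #{A : Finset (ZMod n) | #A = j ∧ ∑ a ∈ A, a = r} : ℂ) =
      ∑ A : Finset (ZMod n) with #A = j, ∑ t : AddAction.stabilizer (ZMod n) A,
        ZMod.stdAddChar (-(t * r : ZMod n)) * (-1) ^ (#A + #A / addOrderOf (t : ZMod n)) := by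
  have hfourier (A : Finset (ZMod n)) : (if ∑ a ∈ A, a = r then (n : ℂ) else 0) =
      ∑ t : ZMod n, ZMod.stdAddChar (-(t * r)) * ZMod.stdAddChar (t * ∑ a ∈ A, a) := by
    simp only [← AddChar.map_add_eq_mul, neg_add_eq_sub, ← mul_sub]
    rw [AddChar.sum_mulShift _ (ZMod.isPrimitive_stdAddChar n)]
    simp [sub_eq_zero]
  calc (n * #{A : Finset (ZMod n) | #A = j ∧ ∑ a ∈ A, a = r} : ℂ)
      = ∑ A : Finset (ZMod n) with #A = j, if ∑ a ∈ A, a = r then (n : ℂ) else 0 := by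
        rw [← sum_filter, filter_filter, sum_const, nsmul_eq_mul, mul_comm]
    _ = ∑ t : ZMod n, ZMod.stdAddChar (-(t * r)) *
          ∑ A : Finset (ZMod n) with #A = j, ZMod.stdAddChar (t * ∑ a ∈ A, a) := by
        simp only [hfourier, mul_sum _ _ (ZMod.stdAddChar _)]
        exact sum_comm
    _ = _ := by
        simp only [sum_stdAddChar_mul_sum]
        simp only [mul_sum, mul_ite, mul_zero]
        rw [sum_comm]
        refine sum_congr rfl fun A _ ↦ ?_
        rw [← sum_filter]
        exact sum_subtype _ (by simp) _

end CharacterSums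

section SignCharacter

open scoped Pointwise

variable {n : ℕ} {A : Finset (ZMod n)}

/-- The sign `-1` or `1` of the letter at `i` in the cyclic word with descents at `A`: a ranking
of `ZMod n` compatible with `A` is reversed or preserved by `i ↦ i + 1` accordingly. -/
def letterSign (A : Finset (ZMod n)) (i : ZMod n) : ℤ := if i ∈ A then -1 else 1

/-- The product of the signs of the `m` letters of `A` at `i, i + 1, …, i + (m - 1)`. -/
def pathSign (A : Finset (ZMod n)) (i : ZMod n) (m : ℕ) : ℤ :=
  (-1) ^ Nat.count (fun l : ℕ ↦ i + l ∈ A) m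

theorem pathSign_zero (i : ZMod n) : pathSign A i 0 = 1 := by simp [pathSign]

theorem pathSign_one (i : ZMod n) : pathSign A i 1 = letterSign A i := by
  by_cases h : i ∈ A <;> simp [pathSign, letterSign, Nat.count_succ, h]

theorem pathSign_add (i : ZMod n) (a b : ℕ) :
    pathSign A i (a + b) = pathSign A i a * pathSign A (i + a) b := by
  simp [pathSign, Nat.count_add, pow_add, add_assoc]

theorem pathSign_succ (i : ZMod n) (m : ℕ) :
    pathSign A i (m + 1) = letterSign A i * pathSign A (i + 1) m := by
  rw [add_comm, pathSign_add, pathSign_one, Nat.cast_one]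

theorem pathSign_mul_self (i : ZMod n) (m : ℕ) : pathSign A i m * pathSign A i m = 1 := by
  rw [pathSign, ← mul_pow]
  simp

theorem letterSign_eq_iff {i k : ZMod n} :
    letterSign A i = letterSign A k ↔ (i ∈ A ↔ k ∈ A) := by
  unfold letterSign
  split_ifs <;> simp_all

theorem letterSign_of_sub_mem_stabilizer {i k : ZMod n}
    (h : k - i ∈ AddAction.stabilizer (ZMod n) A) : letterSign A k = letterSign A i :=
  letterSign_eq_iff.2 (mem_iff_mem_of_sub_mem_stabilizer h)

theorem pathSign_of_sub_mem_stabilizer {i k : ZMod n}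
    (h : k - i ∈ AddAction.stabilizer (ZMod n) A) (m : ℕ) : pathSign A k m = pathSign A i m := by
  have hmem (l : ℕ) : k + l ∈ A ↔ i + l ∈ A :=
    mem_iff_mem_of_sub_mem_stabilizer (by rwa [add_sub_add_right_eq_sub])
  simp only [pathSign, hmem]

variable [NeZero n]

theorem sub_mem_stabilizer_of_letterSign_add {i k : ZMod n}
    (h : ∀ m : ℕ, letterSign A (i + m) = letterSign A (k + m)) :
    k - i ∈ AddAction.stabilizer (ZMod n) A := by
  refine AddAction.mem_stabilizer_finset.2 fun b ↦ ?_
  have hb := letterSign_eq_iff.1 (h (b - i).val)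
  rw [ZMod.natCast_zmod_val, add_sub_cancel] at hb
  rw [hb, vadd_eq_add, sub_add_comm, add_comm]

theorem count_add_mem (A : Finset (ZMod n)) (i : ZMod n) :
    Nat.count (fun l : ℕ ↦ i + l ∈ A) n = #A := by
  calc Nat.count (fun l : ℕ ↦ i + l ∈ A) n
      = ∑ a : ZMod n, if i + (a.val : ℕ) ∈ A then 1 else 0 := by
        rw [Nat.count_eq_card_filter_range, card_filter,
          sum_zmod_val fun l ↦ if i + (l : ℕ) ∈ A then 1 else 0]
    _ = ∑ a : ZMod n, if a ∈ A then 1 else 0 := by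
        simp only [ZMod.natCast_zmod_val]
        exact Equiv.sum_comp (Equiv.addLeft i) fun a ↦ if a ∈ A then 1 else 0
    _ = #A := by simp

theorem pathSign_card (i : ZMod n) : pathSign A i n = (-1) ^ #A := by
  rw [pathSign, count_add_mem]

theorem pathSign_eq_of_mem_stabilizer {v : ℕ} (hv : (v : ZMod n) ∈ AddAction.stabilizer (ZMod n) A)
    (i : ZMod n) : pathSign A i v = pathSign A 0 v := by
  apply mul_left_cancel₀ (left_ne_zero_of_mul_eq_one (pathSign_mul_self (A := A) 0 i.val))
  calc pathSign A 0 i.val * pathSign A i v = pathSign A 0 (v + i.val) := by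
        rw [add_comm, pathSign_add, zero_add, ZMod.natCast_zmod_val]
    _ = pathSign A 0 i.val * pathSign A 0 v := by
        rw [pathSign_add, mul_comm,
          pathSign_of_sub_mem_stabilizer (i := 0) (k := 0 + (v : ZMod n))
            (by simpa using hv)]

theorem periodic_pathSign_pow (i : ZMod n) :
    Function.Periodic (fun m ↦ pathSign A i m ^ (#A + 1)) n := by
  intro m
  simp only [pathSign_add, pathSign_card, mul_pow, ← pow_mul]
  rw [(Nat.even_mul_succ_self #A).neg_one_pow, mul_one]

/-- The sign of the permutation of `A` induced by translation by an element of its stabilizer: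
translation by `t` rotates the cyclically ordered set `A` by the number of its elements in
`[0, t)`. -/
def rotationSign (A : Finset (ZMod n)) : AddChar (AddAction.stabilizer (ZMod n) A) ℤ where
  toFun t := pathSign A 0 (t : ZMod n).val ^ (#A + 1)
  map_zero_eq_one' := by simp [pathSign_zero]
  map_add_eq_mul' s t := by
    rw [AddSubgroup.coe_add, ZMod.val_add, (periodic_pathSign_pow 0).map_mod_nat, pathSign_add,
      mul_pow, pathSign_eq_of_mem_stabilizer (by simp) (0 + _)]

theorem rotationSign_apply (t : AddAction.stabilizer (ZMod n) A) :
    rotationSign A t = pathSign A 0 (t : ZMod n).val ^ (#A + 1) := rfl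

theorem count_mul_of_periodic {p : ℕ → Prop} [DecidablePred p] {d : ℕ}
    (hp : Function.Periodic p d) (q : ℕ) : Nat.count p (q * d) = q * Nat.count p d := by
  induction q with
  | zero => simp
  | succ q ih =>
    have hshift (k : ℕ) : p (q * d + k) = p k := by
      rw [add_comm]
      exact hp.nsmul q k
    simp only [Nat.succ_mul, Nat.count_add, ih, hshift]

theorem mul_count_eq_mul_card {v : ℕ} (hv : (v : ZMod n) ∈ AddAction.stabilizer (ZMod n) A) :
    n * Nat.count (fun l : ℕ ↦ 0 + (l : ZMod n) ∈ A) v = v * #A := by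
  have hper : Function.Periodic (fun l : ℕ ↦ 0 + (l : ZMod n) ∈ A) v := fun l ↦
    propext (mem_iff_mem_of_sub_mem_stabilizer (by simpa using hv))
  have hpern : Function.Periodic (fun l : ℕ ↦ 0 + (l : ZMod n) ∈ A) n := fun l ↦ by simp
  rw [← count_mul_of_periodic hper, mul_comm n v, count_mul_of_periodic hpern, count_add_mem]

theorem rotationSign_eq (t : AddAction.stabilizer (ZMod n) A) :
    rotationSign A t = (-1) ^ (#A + #A / addOrderOf (t : ZMod n)) := by
  have hcount := mul_count_eq_mul_card (A := A) (v := (t : ZMod n).val) (by simp)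
  have hord : addOrderOf (t : ZMod n) = n / n.gcd (t : ZMod n).val := by
    conv_lhs => rw [← ZMod.natCast_zmod_val (t : ZMod n), ZMod.addOrderOf_coe _ (NeZero.ne n)]
  rw [rotationSign_apply, pathSign, ← pow_mul, hord]
  obtain ⟨d, u, hdu, hn, hv⟩ := Nat.exists_coprime n (t : ZMod n).val
  set g := n.gcd (t : ZMod n).val
  set c := Nat.count (fun l : ℕ ↦ 0 + (l : ZMod n) ∈ A) (t : ZMod n).val
  have hg : 0 < g := Nat.gcd_pos_of_pos_left _ (NeZero.pos n)
  have hd : 0 < d := Nat.pos_of_mul_pos_right (hn ▸ NeZero.pos n)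
  have hdc : d * c = u * #A := by
    apply Nat.eq_of_mul_eq_mul_left hg
    calc g * (d * c) = n * c := by rw [mul_left_comm, ← mul_assoc, ← hn]
      _ = g * (u * #A) := by rw [hcount, hv]; ring
  obtain ⟨q, hq⟩ : d ∣ #A := hdu.dvd_of_dvd_mul_left ⟨c, hdc.symm⟩
  have hc : c = u * q := Nat.eq_of_mul_eq_mul_left hd (by rw [hdc, hq]; ring)
  have hdiv : n / g = d := Nat.div_eq_of_eq_mul_left hg hn
  rw [hdiv, hc, hq, Nat.mul_div_cancel_left _ hd]
  have hparity : ¬ (Even d ∧ Even u) := fun h ↦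
    Nat.not_coprime_of_dvd_of_dvd one_lt_two h.1.two_dvd h.2.two_dvd hdu
  apply neg_one_pow_congr
  simp only [Nat.even_mul, Nat.even_add, Nat.even_add_one]
  tauto

theorem rotationSign_eq_one_or_neg_one (t : AddAction.stabilizer (ZMod n) A) :
    rotationSign A t = 1 ∨ rotationSign A t = -1 := by
  rw [rotationSign_apply, pathSign, ← pow_mul]
  exact neg_one_pow_eq_or ℤ _

theorem rotationSign_eq_stdAddChar_iff :
    (∀ t, (rotationSign A t : ℂ) = ZMod.stdAddChar (t : ZMod n)) ↔
      Function.Injective (rotationSign A) := by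
  refine ⟨fun h s t hst ↦ Subtype.ext (ZMod.injective_stdAddChar (by rw [← h, ← h, hst])),
    fun hinj t ↦ ?_⟩
  rcases rotationSign_eq_one_or_neg_one t with h1 | h1
  · obtain rfl : t = 0 := hinj (h1.trans (rotationSign A).map_zero_eq_one.symm)
    simp
  · have h2 : t + t = 0 := hinj (by simp [AddChar.map_add_eq_mul, h1])
    have hsq : ZMod.stdAddChar (t : ZMod n) * ZMod.stdAddChar (t : ZMod n) = (1 : ℂ) := by
      rw [← AddChar.map_add_eq_mul, ← AddSubgroup.coe_add, h2]
      simp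
    have hne : ZMod.stdAddChar (t : ZMod n) ≠ (1 : ℂ) := fun h ↦ by
      obtain rfl : t = 0 := Subtype.ext
        (ZMod.injective_stdAddChar (h.trans (AddChar.map_zero_eq_one _).symm))
      simp at h1
    rw [(mul_self_eq_one_iff.1 hsq).resolve_left hne, h1]
    simp

open Classical in
theorem sum_stdAddChar_neg_mul_rotationSign (A : Finset (ZMod n)) :
    ∑ t : AddAction.stabilizer (ZMod n) A, ZMod.stdAddChar (-t : ZMod n) * (rotationSign A t : ℂ) =
      if Function.Injective (rotationSign A) then (Nat.card (AddAction.stabilizer (ZMod n) A) : ℂ)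
      else 0 := by
  let χ : AddChar (AddAction.stabilizer (ZMod n) A) ℂ :=
    (ZMod.stdAddChar.compAddMonoidHom (AddSubgroup.subtype _))⁻¹ *
      (Int.castRingHom ℂ).toMonoidHom.compAddChar (rotationSign A)
  have hχ (t : AddAction.stabilizer (ZMod n) A) :
      χ t = ZMod.stdAddChar (-t : ZMod n) * (rotationSign A t : ℂ) := by
    simp [χ, AddChar.mul_apply, AddChar.inv_apply]
  have hzero : χ = 0 ↔ Function.Injective (rotationSign A) := by
    rw [← rotationSign_eq_stdAddChar_iff, AddChar.eq_zero_iff]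
    refine forall_congr' fun t ↦ ?_
    rw [hχ, AddChar.map_neg_eq_inv, inv_mul_eq_one₀ (AddChar.val_isUnit _ _).ne_zero, eq_comm]
  simp only [← hχ, ← hzero, AddChar.sum_eq_ite, Nat.card_eq_fintype_card]

end SignCharacter

section CompatibleRankings

open scoped Pointwise

variable {n : ℕ} {A : Finset (ZMod n)} {φ φ' : ZMod n ≃ Fin n}

/-- A ranking `φ` of `ZMod n` is compatible with `A` if it ranks `A` below its complement and
`i ↦ i + 1` reverses the ranking on `A` and preserves it on the complement. -/
structure IsCompatible (A : Finset (ZMod n)) (φ : ZMod n ≃ Fin n) : Prop where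
  lt : ∀ i ∈ A, ∀ k ∉ A, φ i < φ k
  anti : ∀ i ∈ A, ∀ k ∈ A, φ i < φ k → φ (k + 1) < φ (i + 1)
  mono : ∀ i ∉ A, ∀ k ∉ A, φ i < φ k → φ (i + 1) < φ (k + 1)

/-- The comparison of `i` and `k` under a ranking: `1` if `φ i < φ k`, `0` if `i = k` and `-1` if
`φ k < φ i`. -/
def cmpSign (φ : ZMod n ≃ Fin n) (i k : ZMod n) : ℤ := Int.sign ((φ k : ℤ) - φ i)

theorem cmpSign_eq_one_iff {i k : ZMod n} : cmpSign φ i k = 1 ↔ φ i < φ k := by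
  rw [cmpSign, Int.sign_eq_one_iff_pos, sub_pos, Nat.cast_lt, Fin.val_fin_lt]

theorem cmpSign_comm (i k : ZMod n) : cmpSign φ k i = -cmpSign φ i k := by
  rw [cmpSign, cmpSign, ← Int.sign_neg, neg_sub]

theorem cmpSign_self (i : ZMod n) : cmpSign φ i i = 0 := by simp [cmpSign]

theorem cmpSign_eq_zero_iff {i k : ZMod n} : cmpSign φ i k = 0 ↔ i = k := by
  rw [cmpSign, Int.sign_eq_zero_iff_zero, sub_eq_zero, Nat.cast_inj, Fin.val_inj,
    φ.injective.eq_iff, eq_comm]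

theorem eq_of_cmpSign_eq (h : ∀ i k, cmpSign φ i k = cmpSign φ' i k) : φ = φ' := by
  have hmono : StrictMono (φ' ∘ φ.symm) := fun x y hxy ↦ by
    rw [Function.comp, Function.comp, ← cmpSign_eq_one_iff, ← h, cmpSign_eq_one_iff]
    simpa using hxy
  have hid : φ' ∘ φ.symm = id :=
    (StrictMono.range_inj hmono strictMono_id).1
      ((φ'.surjective.comp φ.symm.surjective).range_eq.trans Set.range_id.symm)
  ext i
  simpa using congrArg Fin.val (congrFun hid (φ i)).symm

namespace IsCompatible

theorem cmpSign_eq_of_letterSign_ne (h : IsCompatible A φ) (h' : IsCompatible A φ') {i k : ZMod n}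
    (hik : letterSign A i ≠ letterSign A k) : cmpSign φ i k = cmpSign φ' i k := by
  rw [Ne, letterSign_eq_iff] at hik
  by_cases hi : i ∈ A
  · have hk : k ∉ A := by tauto
    rw [cmpSign_eq_one_iff.2 (h.lt i hi k hk), cmpSign_eq_one_iff.2 (h'.lt i hi k hk)]
  · have hk : k ∈ A := by tauto
    rw [cmpSign_comm k, cmpSign_comm k, cmpSign_eq_one_iff.2 (h.lt k hk i hi),
      cmpSign_eq_one_iff.2 (h'.lt k hk i hi)]

theorem cmpSign_add_one (h : IsCompatible A φ) {i k : ZMod n}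
    (hik : letterSign A i = letterSign A k) :
    cmpSign φ (i + 1) (k + 1) = letterSign A i * cmpSign φ i k := by
  wlog hlt : φ i < φ k generalizing i k
  · rcases (not_lt.1 hlt).eq_or_lt with heq | hgt
    · obtain rfl := φ.injective heq
      simp only [cmpSign_self, mul_zero]
    · rw [cmpSign_comm (k + 1), cmpSign_comm k, this hik.symm hgt, hik, mul_neg]
  rw [cmpSign_eq_one_iff.2 hlt, mul_one]
  have hmem := letterSign_eq_iff.1 hik
  by_cases hi : i ∈ A
  · rw [cmpSign_comm (k + 1), cmpSign_eq_one_iff.2 (h.anti i hi k (hmem.1 hi) hlt), letterSign,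
      if_pos hi]
  · rw [cmpSign_eq_one_iff.2 (h.mono i hi k (mt hmem.2 hi) hlt), letterSign, if_neg hi]

theorem cmpSign_add_natCast (h : IsCompatible A φ) {i k : ZMod n} {m : ℕ}
    (hik : ∀ l < m, letterSign A (i + l) = letterSign A (k + l)) :
    cmpSign φ (i + m) (k + m) = pathSign A i m * cmpSign φ i k := by
  induction m with
  | zero => simp [pathSign_zero]
  | succ m ih =>
    rw [Nat.cast_succ, ← add_assoc, ← add_assoc, h.cmpSign_add_one (hik m m.lt_succ_self),
      ih fun l hl ↦ hik l (hl.trans m.lt_succ_self), pathSign_add, pathSign_one]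
    ring

theorem cmpSign_add_of_sub_mem_stabilizer (h : IsCompatible A φ) {i k : ZMod n}
    (hik : k - i ∈ AddAction.stabilizer (ZMod n) A) (m : ℕ) :
    cmpSign φ (i + m) (k + m) = pathSign A i m * cmpSign φ i k :=
  h.cmpSign_add_natCast fun l _ ↦
    (letterSign_of_sub_mem_stabilizer (by rwa [add_sub_add_right_eq_sub])).symm

theorem comp_addRight (h : IsCompatible A φ) {t : ZMod n}
    (ht : t ∈ AddAction.stabilizer (ZMod n) A) : IsCompatible A ((Equiv.addRight t).trans φ) := by
  have hmem (i : ZMod n) : i + t ∈ A ↔ i ∈ A :=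
    mem_iff_mem_of_sub_mem_stabilizer (by simpa using ht)
  constructor
  · intro i hi k hk
    exact h.lt _ ((hmem i).2 hi) _ (mt (hmem k).1 hk)
  · intro i hi k hk hik
    simpa [add_right_comm] using h.anti _ ((hmem i).2 hi) _ ((hmem k).2 hk) hik
  · intro i hi k hk hik
    simpa [add_right_comm] using h.mono _ (mt (hmem i).1 hi) _ (mt (hmem k).1 hk) hik

variable [NeZero n]

theorem cmpSign_eq_of_sub_notMem_stabilizer (h : IsCompatible A φ) (h' : IsCompatible A φ')
    {i k : ZMod n} (hik : k - i ∉ AddAction.stabilizer (ZMod n) A) :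
    cmpSign φ i k = cmpSign φ' i k := by
  have hex : ∃ m : ℕ, letterSign A (i + m) ≠ letterSign A (k + m) := by
    by_contra! hall
    exact hik (sub_mem_stabilizer_of_letterSign_add hall)
  classical
  have hpath {ψ : ZMod n ≃ Fin n} (hψ : IsCompatible A ψ) :=
    hψ.cmpSign_add_natCast (m := Nat.find hex) fun l hl ↦ not_not.1 (Nat.find_min hex hl)
  have heq := h.cmpSign_eq_of_letterSign_ne h' (Nat.find_spec hex)
  rw [hpath h, hpath h'] at heq
  exact mul_left_cancel₀ (left_ne_zero_of_mul_eq_one (pathSign_mul_self i _)) heq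

theorem rotationSign_injective (h : IsCompatible A φ) : Function.Injective (rotationSign A) := by
  suffices hker : ∀ t, rotationSign A t = 1 → t = 0 by
    intro s t hst
    refine sub_eq_zero.1 (hker _ ?_)
    rw [sub_eq_add_neg, AddChar.map_add_eq_mul, hst, ← AddChar.map_add_eq_mul, add_neg_cancel,
      AddChar.map_zero_eq_one]
  intro t ht
  by_contra hne
  have hne' : (t : ZMod n) ≠ 0 := fun h0 ↦ hne (Subtype.ext h0)
  have hstep (i : ZMod n) := h.cmpSign_add_of_sub_mem_stabilizer (i := i) (k := i + t) (by simp)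
  have hA : (-1 : ℤ) ^ #A = 1 := by
    have h0 := hstep 0 n
    rw [CharP.cast_eq_zero, add_zero, add_zero, pathSign_card] at h0
    exact (mul_eq_right₀ (cmpSign_eq_zero_iff.not.2 (by simpa using hne'.symm))).1 h0.symm
  have hpath : pathSign A 0 (t : ZMod n).val = 1 := by
    have hpow : pathSign A 0 (t : ZMod n).val ^ #A = 1 := by
      rw [pathSign, ← pow_mul, mul_comm, pow_mul, hA, one_pow]
    rwa [rotationSign_apply, pow_succ, hpow, one_mul] at ht
  obtain ⟨j, hj⟩ := Finite.exists_max φ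
  have hlt {i : ZMod n} (hi : i ≠ j) : φ i < φ j := (hj i).lt_of_ne (φ.injective.ne hi)
  have hmax := hstep (j - t) (t : ZMod n).val
  rw [pathSign_eq_of_mem_stabilizer (by simp), hpath, ZMod.natCast_zmod_val, sub_add_cancel,
    cmpSign_comm (j + (t : ZMod n)), cmpSign_eq_one_iff.2 (hlt (by simpa using hne')),
    cmpSign_eq_one_iff.2 (hlt (by simpa using hne'))] at hmax
  norm_num at hmax

theorem eq_of_isMin (h : IsCompatible A φ) (h' : IsCompatible A φ') {a : ZMod n}
    (ha : ∀ i, φ a ≤ φ i) (ha' : ∀ i, φ' a ≤ φ' i) : φ = φ' := by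
  refine eq_of_cmpSign_eq fun i k ↦ ?_
  by_cases hik : k - i ∈ AddAction.stabilizer (ZMod n) A
  · have hmin : cmpSign φ a (a + (k - i)) = cmpSign φ' a (a + (k - i)) := by
      by_cases hne : a = a + (k - i)
      · rw [← hne, cmpSign_self, cmpSign_self]
      · rw [cmpSign_eq_one_iff.2 ((ha _).lt_of_ne (φ.injective.ne hne)),
          cmpSign_eq_one_iff.2 ((ha' _).lt_of_ne (φ'.injective.ne hne))]
    have hpath {ψ : ZMod n ≃ Fin n} (hψ : IsCompatible A ψ) :
        cmpSign ψ i k = pathSign A a (i - a).val * cmpSign ψ a (a + (k - i)) := by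
      rw [← hψ.cmpSign_add_of_sub_mem_stabilizer (by simpa using hik), ZMod.natCast_zmod_val]
      congr 1 <;> abel
    rw [hpath h, hpath h', hmin]
  · exact h.cmpSign_eq_of_sub_notMem_stabilizer h' hik

theorem exists_eq_comp_addRight (h : IsCompatible A φ) (h' : IsCompatible A φ') :
    ∃ t ∈ AddAction.stabilizer (ZMod n) A, (Equiv.addRight t).trans φ = φ' := by
  obtain ⟨b, hb⟩ := Finite.exists_min φ
  obtain ⟨a, ha⟩ := Finite.exists_min φ'
  have hmem : b - a ∈ AddAction.stabilizer (ZMod n) A := by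
    by_contra hnot
    have hne : a ≠ b := by
      rintro rfl
      exact hnot (by simp)
    have heq := h.cmpSign_eq_of_sub_notMem_stabilizer h' hnot
    rw [cmpSign_comm b, cmpSign_eq_one_iff.2 ((hb a).lt_of_ne (φ.injective.ne hne.symm)),
      cmpSign_eq_one_iff.2 ((ha b).lt_of_ne (φ'.injective.ne hne))] at heq
    norm_num at heq
  exact ⟨b - a, hmem, (h.comp_addRight hmem).eq_of_isMin h' (fun i ↦ by simpa using hb _) ha⟩

theorem card_eq (h : IsCompatible A φ) :
    Nat.card {φ // IsCompatible A φ} = Nat.card (AddAction.stabilizer (ZMod n) A) := by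
  symm
  refine Nat.card_eq_of_bijective
    (fun t ↦ ⟨(Equiv.addRight (t : ZMod n)).trans φ, h.comp_addRight t.2⟩) ⟨fun s t hst ↦ ?_, ?_⟩
  · have h0 := DFunLike.congr_fun (congrArg Subtype.val hst) 0
    exact Subtype.ext (by simpa using h0)
  · rintro ⟨φ', h'⟩
    obtain ⟨t, ht, rfl⟩ := h.exists_eq_comp_addRight h'
    exact ⟨⟨t, ht⟩, rfl⟩

end IsCompatible

end CompatibleRankings

section Itineraries

open scoped Pointwise

variable {n : ℕ} {A : Finset (ZMod n)}

/-- The successive path signs out of `i`, ordered lexicographically: any ranking compatible with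
`A` is weakly increasing in the itinerary. -/
def itinerary (A : Finset (ZMod n)) (i : ZMod n) : Lex (ℕ → ℤ) :=
  toLex fun m ↦ pathSign A i (m + 1)

theorem itinerary_eq_itinerary_iff {i k : ZMod n} :
    itinerary A i = itinerary A k ↔ ∀ m, pathSign A i m = pathSign A k m := by
  refine ⟨fun h m ↦ ?_, fun h ↦ funext fun m ↦ h (m + 1)⟩
  cases m with
  | zero => rw [pathSign_zero, pathSign_zero]
  | succ m => exact congrFun h m

theorem itinerary_lt_itinerary_iff {i k : ZMod n} :
    itinerary A i < itinerary A k ↔ ∃ m, (∀ l < m, pathSign A i l = pathSign A k l) ∧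
      pathSign A i m < pathSign A k m := by
  constructor
  · rintro ⟨m, heq, hlt⟩
    refine ⟨m + 1, fun l hl ↦ ?_, hlt⟩
    cases l with
    | zero => rw [pathSign_zero, pathSign_zero]
    | succ l => exact heq l (Nat.lt_of_succ_lt_succ hl)
  · rintro ⟨m, heq, hlt⟩
    cases m with
    | zero => simp [pathSign_zero] at hlt
    | succ m => exact ⟨m, fun l hl ↦ heq (l + 1) (Nat.succ_lt_succ hl), hlt⟩

theorem itinerary_lt_of_mem_of_notMem {i k : ZMod n} (hi : i ∈ A) (hk : k ∉ A) :
    itinerary A i < itinerary A k :=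
  itinerary_lt_itinerary_iff.2 ⟨1, fun l hl ↦ by
    rw [Nat.lt_one_iff.1 hl, pathSign_zero, pathSign_zero], by
    simp [pathSign_one, letterSign, hi, hk]⟩

theorem itinerary_add_one_lt_of_mem {i k : ZMod n} (hi : i ∈ A) (hk : k ∈ A)
    (h : itinerary A i < itinerary A k) : itinerary A (k + 1) < itinerary A (i + 1) := by
  rw [itinerary_lt_itinerary_iff] at h ⊢
  obtain ⟨_ | m, heq, hlt⟩ := h
  · simp [pathSign_zero] at hlt
  · simp only [pathSign_succ, letterSign, if_pos hi, if_pos hk] at hlt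
    refine ⟨m, fun l hl ↦ ?_, by linarith⟩
    have hl' := heq (l + 1) (Nat.succ_lt_succ hl)
    simp only [pathSign_succ, letterSign, if_pos hi, if_pos hk] at hl'
    linarith

theorem itinerary_add_one_lt_of_notMem {i k : ZMod n} (hi : i ∉ A) (hk : k ∉ A)
    (h : itinerary A i < itinerary A k) : itinerary A (i + 1) < itinerary A (k + 1) := by
  rw [itinerary_lt_itinerary_iff] at h ⊢
  obtain ⟨_ | m, heq, hlt⟩ := h
  · simp [pathSign_zero] at hlt
  · simp only [pathSign_succ, letterSign, if_neg hi, if_neg hk, one_mul] at hlt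
    refine ⟨m, fun l hl ↦ ?_, hlt⟩
    simpa only [pathSign_succ, letterSign, if_neg hi, if_neg hk, one_mul] using
      heq (l + 1) (Nat.succ_lt_succ hl)

/-- The itinerary of `i` with ties broken by the path sign from `0` to `i`. When the rotation sign
is injective, sorting by this key is a ranking compatible with `A`. -/
def rankKey (A : Finset (ZMod n)) (i : ZMod n) : Lex (ℕ → ℤ) ×ₗ ℤ :=
  toLex (itinerary A i, pathSign A 0 i.val)

theorem rankKey_lt_rankKey_iff {i k : ZMod n} :
    rankKey A i < rankKey A k ↔ itinerary A i < itinerary A k ∨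
      itinerary A i = itinerary A k ∧ pathSign A 0 i.val < pathSign A 0 k.val :=
  Prod.Lex.lt_iff

variable [NeZero n]

theorem sub_mem_stabilizer_iff_itinerary_eq {i k : ZMod n} :
    k - i ∈ AddAction.stabilizer (ZMod n) A ↔ itinerary A i = itinerary A k := by
  rw [itinerary_eq_itinerary_iff]
  refine ⟨fun h m ↦ (pathSign_of_sub_mem_stabilizer h m).symm,
    fun h ↦ sub_mem_stabilizer_of_letterSign_add fun m ↦ ?_⟩
  have hm := h (m + 1)
  rw [pathSign_add, pathSign_add, pathSign_one, pathSign_one, h m] at hm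
  exact mul_left_cancel₀ (left_ne_zero_of_mul_eq_one (pathSign_mul_self k m)) hm

theorem even_card_and_pathSign_of_rotationSign_injective
    (hinj : Function.Injective (rotationSign A))
    {t : ZMod n} (ht : t ∈ AddAction.stabilizer (ZMod n) A) (h0 : t ≠ 0) :
    Even #A ∧ pathSign A 0 t.val = -1 := by
  have hne : rotationSign A ⟨t, ht⟩ ≠ 1 := fun h ↦
    h0 (congrArg Subtype.val (hinj (h.trans (rotationSign A).map_zero_eq_one.symm)))
  rw [rotationSign_apply] at hne
  have hsign := mul_self_eq_one_iff.1 (pathSign_mul_self (A := A) 0 t.val)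
  constructor
  · by_contra hodd
    obtain ⟨q, hq⟩ := Nat.even_add_one.2 hodd
    exact hne (by rw [hq, pow_add, ← mul_pow, pathSign_mul_self, one_pow])
  · exact hsign.resolve_left fun h ↦ hne (by rw [h, one_pow])

theorem pathSign_val_add_natCast (hA : Even #A) (i : ZMod n) (m : ℕ) :
    pathSign A 0 (i + m).val = pathSign A 0 i.val * pathSign A i m := by
  have hper : Function.Periodic (pathSign A 0) n := fun l ↦ by
    rw [pathSign_add, pathSign_card, hA.neg_one_pow, mul_one]
  rw [ZMod.val_add, ZMod.val_natCast, Nat.add_mod_mod, hper.map_mod_nat, pathSign_add, zero_add,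
    ZMod.natCast_zmod_val]

theorem rankKey_injective (hinj : Function.Injective (rotationSign A)) :
    Function.Injective (rankKey A) := by
  intro i k hik
  by_contra hne
  have hstab := sub_mem_stabilizer_iff_itinerary_eq.2 (congrArg (fun x ↦ (ofLex x).1) hik)
  have hsign : pathSign A 0 i.val = pathSign A 0 k.val := congrArg (fun x ↦ (ofLex x).2) hik
  obtain ⟨hA, hpath⟩ := even_card_and_pathSign_of_rotationSign_injective hinj hstab
    (sub_ne_zero.2 (Ne.symm hne))
  have hk := pathSign_val_add_natCast hA i (k - i).val
  rw [pathSign_eq_of_mem_stabilizer (by rwa [ZMod.natCast_zmod_val]) i, hpath,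
    ZMod.natCast_zmod_val, add_sub_cancel, ← hsign] at hk
  have h1 := pathSign_mul_self (A := A) 0 i.val
  exact left_ne_zero_of_mul_eq_one h1 (by linarith)

theorem pathSign_val_add_one_of_itinerary_eq (hinj : Function.Injective (rotationSign A))
    {i k : ZMod n} (heq : itinerary A i = itinerary A k) (hne : i ≠ k) (j : ZMod n) :
    pathSign A 0 (j + 1).val = pathSign A 0 j.val * letterSign A j := by
  have hA := (even_card_and_pathSign_of_rotationSign_injective hinj
    (sub_mem_stabilizer_iff_itinerary_eq.2 heq) (sub_ne_zero.2 hne.symm)).1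
  rw [← pathSign_one, ← pathSign_val_add_natCast hA, Nat.cast_one]

theorem itinerary_add_one_eq {i k : ZMod n} (heq : itinerary A i = itinerary A k) :
    itinerary A (i + 1) = itinerary A (k + 1) := by
  rw [← sub_mem_stabilizer_iff_itinerary_eq] at heq ⊢
  rwa [add_sub_add_right_eq_sub]

theorem rankKey_add_one_lt_of_mem (hinj : Function.Injective (rotationSign A)) {i k : ZMod n}
    (hi : i ∈ A) (hk : k ∈ A) (hlt : rankKey A i < rankKey A k) :
    rankKey A (k + 1) < rankKey A (i + 1) := by
  have hne : i ≠ k := fun h ↦ hlt.ne (congrArg _ h)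
  rw [rankKey_lt_rankKey_iff] at hlt ⊢
  refine hlt.imp (itinerary_add_one_lt_of_mem hi hk) fun ⟨heq, hsign⟩ ↦
    ⟨(itinerary_add_one_eq heq).symm, ?_⟩
  rw [pathSign_val_add_one_of_itinerary_eq hinj heq hne,
    pathSign_val_add_one_of_itinerary_eq hinj heq hne, letterSign, letterSign, if_pos hi,
    if_pos hk]
  linarith only [hsign]

theorem rankKey_add_one_lt_of_notMem (hinj : Function.Injective (rotationSign A)) {i k : ZMod n}
    (hi : i ∉ A) (hk : k ∉ A) (hlt : rankKey A i < rankKey A k) :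
    rankKey A (i + 1) < rankKey A (k + 1) := by
  have hne : i ≠ k := fun h ↦ hlt.ne (congrArg _ h)
  rw [rankKey_lt_rankKey_iff] at hlt ⊢
  refine hlt.imp (itinerary_add_one_lt_of_notMem hi hk) fun ⟨heq, hsign⟩ ↦
    ⟨itinerary_add_one_eq heq, ?_⟩
  rwa [pathSign_val_add_one_of_itinerary_eq hinj heq hne,
    pathSign_val_add_one_of_itinerary_eq hinj heq hne, letterSign, letterSign, if_neg hi,
    if_neg hk, mul_one, mul_one]

theorem exists_equiv_fin_lt_iff {α β : Type*} [Fintype α] [LinearOrder β] {f : α → β}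
    (hf : Function.Injective f) {m : ℕ} (hm : Fintype.card α = m) :
    ∃ φ : α ≃ Fin m, ∀ a b, φ a < φ b ↔ f a < f b := by
  let _ : LinearOrder α := LinearOrder.lift' f hf
  exact ⟨(Fintype.orderIsoFinOfCardEq α hm).symm.toEquiv, fun a b ↦
    (Fintype.orderIsoFinOfCardEq α hm).symm.lt_iff_lt⟩

theorem exists_isCompatible (hinj : Function.Injective (rotationSign A)) :
    ∃ φ, IsCompatible A φ := by
  obtain ⟨φ, hφ⟩ := exists_equiv_fin_lt_iff (rankKey_injective hinj) (ZMod.card n)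
  refine ⟨φ, fun i hi k hk ↦ ?_, fun i hi k hk ↦ ?_, fun i hi k hk ↦ ?_⟩
  · exact (hφ i k).2 (rankKey_lt_rankKey_iff.2 (.inl (itinerary_lt_of_mem_of_notMem hi hk)))
  · rw [hφ, hφ]
    exact rankKey_add_one_lt_of_mem hinj hi hk
  · rw [hφ, hφ]
    exact rankKey_add_one_lt_of_notMem hinj hi hk

theorem card_isCompatible (A : Finset (ZMod n)) :
    (Nat.card {φ // IsCompatible A φ} : ℂ) = ∑ t : AddAction.stabilizer (ZMod n) A,
      ZMod.stdAddChar (-t : ZMod n) * (-1) ^ (#A + #A / addOrderOf (t : ZMod n)) := by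
  have hsum := sum_stdAddChar_neg_mul_rotationSign A
  simp only [rotationSign_eq, Int.cast_pow, Int.cast_neg, Int.cast_one] at hsum
  rw [hsum]
  split_ifs with hinj
  · obtain ⟨φ, hφ⟩ := exists_isCompatible hinj
    rw [hφ.card_eq]
  · have : IsEmpty {φ // IsCompatible A φ} := ⟨fun φ ↦ hinj φ.2.rotationSign_injective⟩
    rw [Nat.card_of_isEmpty, Nat.cast_zero]

end Itineraries

section CyclicPermutations

open scoped Pointwise

variable {n : ℕ} {A : Finset (ZMod n)} {φ : ZMod n ≃ Fin n}

/-- The permutation of the ranks induced by `i ↦ i + 1`. -/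
def shiftPerm (φ : ZMod n ≃ Fin n) : Equiv.Perm (Fin n) :=
  φ.symm.trans ((Equiv.addRight 1).trans φ)

/-- A map `σ` on `Fin n` folds at `j` if it is decreasing on the first `j` positions and increasing
on the others. -/
def IsFoldAt (j : ℕ) (σ : Fin n → Fin n) : Prop :=
  StrictAntiOn σ {x | (x : ℕ) < j} ∧ StrictMonoOn σ {x | j ≤ (x : ℕ)}

theorem shiftPerm_apply (i : ZMod n) : shiftPerm φ (φ i) = φ (i + 1) := by simp [shiftPerm]

theorem shiftPerm_pow_apply (i : ZMod n) (m : ℕ) : (shiftPerm φ ^ m) (φ i) = φ (i + m) := by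
  induction m with
  | zero => simp
  | succ m ih => rw [pow_succ', Equiv.Perm.mul_apply, ih, shiftPerm_apply, Nat.cast_succ, add_assoc]

variable [NeZero n]

theorem isCyclicPerm_shiftPerm (φ : ZMod n ≃ Fin n) : IsCyclicPerm n (shiftPerm φ) := by
  intro x y
  obtain ⟨i, rfl⟩ := φ.surjective x
  obtain ⟨k, rfl⟩ := φ.surjective y
  refine ⟨(k - i).val, ?_⟩
  rw [zpow_natCast, shiftPerm_pow_apply, ZMod.natCast_zmod_val, add_sub_cancel]

theorem eq_of_shiftPerm_eq {φ' : ZMod n ≃ Fin n} (h0 : φ 0 = φ' 0)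
    (h : shiftPerm φ = shiftPerm φ') : φ = φ' := by
  refine Equiv.ext fun i ↦ ?_
  rw [← zero_add i, ← ZMod.natCast_zmod_val i, ← shiftPerm_pow_apply, ← shiftPerm_pow_apply, h0, h]

theorem exists_shiftPerm_eq {σ : Equiv.Perm (Fin n)} (hσ : IsCyclicPerm n σ) (x : Fin n) :
    ∃ φ : ZMod n ≃ Fin n, φ 0 = x ∧ shiftPerm φ = σ := by
  have hcycle : σ.IsCycleOn (univ : Finset (Fin n)) :=
    ⟨by simp, fun a _ b _ ↦ hσ a b⟩
  have hper : Function.Periodic (fun m ↦ (σ ^ m) x) n := fun m ↦ by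
    have hn := hcycle.pow_card_apply (mem_univ x)
    rw [card_univ, Fintype.card_fin] at hn
    simp only [pow_add, Equiv.Perm.mul_apply, hn]
  have hsurj : Function.Surjective fun i : ZMod n ↦ (σ ^ i.val) x := fun y ↦ by
    obtain ⟨m, -, rfl⟩ := hcycle.exists_pow_eq (mem_univ x) (mem_univ y)
    exact ⟨m, by simp only [ZMod.val_natCast, hper.map_mod_nat]⟩
  let φ := Equiv.ofBijective _
    ((Fintype.bijective_iff_surjective_and_card _).2 ⟨hsurj, by simp [ZMod.card]⟩)
  refine ⟨φ, by simp [φ], Equiv.ext fun y ↦ ?_⟩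
  obtain ⟨i, rfl⟩ := φ.surjective y
  calc shiftPerm φ (φ i) = (σ ^ (((i.val + 1 : ℕ) : ZMod n)).val) x := by
        rw [shiftPerm_apply, Nat.cast_succ, ZMod.natCast_zmod_val]
        rfl
    _ = σ (φ i) := by
        rw [ZMod.val_natCast, hper.map_mod_nat, pow_succ', Equiv.Perm.mul_apply]
        rfl

theorem card_shiftPerm (p : Equiv.Perm (Fin n) → Prop) :
    Nat.card {φ : ZMod n ≃ Fin n // p (shiftPerm φ)} =
      n * Nat.card {σ // IsCyclicPerm n σ ∧ p σ} := by
  have hprod : Nat.card (Fin n × {σ // IsCyclicPerm n σ ∧ p σ}) =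
      n * Nat.card {σ // IsCyclicPerm n σ ∧ p σ} := by rw [Nat.card_prod, Nat.card_fin]
  rw [← hprod]
  refine Nat.card_eq_of_bijective
    (fun φ ↦ (φ.1 0, ⟨shiftPerm φ.1, isCyclicPerm_shiftPerm φ.1, φ.2⟩)) ⟨fun φ φ' h ↦ ?_, ?_⟩
  · exact Subtype.ext (eq_of_shiftPerm_eq (congrArg Prod.fst h)
      (congrArg (fun y ↦ (y.2 : Equiv.Perm (Fin n))) h))
  · rintro ⟨x, σ, hσ, hp⟩
    obtain ⟨φ, rfl, rfl⟩ := exists_shiftPerm_eq hσ x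
    exact ⟨⟨φ, hp⟩, rfl⟩

/-- The elements of `ZMod n` with the `j` lowest ranks. -/
def lowSet (j : ℕ) (φ : ZMod n ≃ Fin n) : Finset (ZMod n) := {i | (φ i : ℕ) < j}

theorem mem_lowSet {j : ℕ} {i : ZMod n} : i ∈ lowSet j φ ↔ (φ i : ℕ) < j := by simp [lowSet]

theorem card_lowSet {j : ℕ} (hj : j ≤ n) : #(lowSet j φ) = j := by
  rw [← card_map φ.toEmbedding, lowSet, map_filter]
  simp [Fin.card_filter_val_lt, hj]

theorem IsCompatible.lowSet_card (h : IsCompatible A φ) : lowSet #A φ = A := by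
  ext i
  rw [mem_lowSet, ← card_map φ.toEmbedding]
  constructor
  · contrapose!
    intro hi
    rw [← Fin.card_Iio]
    refine card_le_card fun x hx ↦ ?_
    obtain ⟨k, hk, rfl⟩ := mem_map.1 hx
    exact mem_Iio.2 (h.lt k hk i hi)
  · intro hi
    rw [← Nat.succ_le_iff, ← Nat.add_one, ← Fin.card_Iic]
    refine card_le_card fun x hx ↦ ?_
    by_contra hnot
    have hx' : φ.symm x ∉ A := fun hmem ↦ hnot (mem_map.2 ⟨_, hmem, φ.apply_symm_apply x⟩)
    have hlt := h.lt i hi _ hx'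
    rw [φ.apply_symm_apply] at hlt
    exact (mem_Iic.1 hx).not_gt hlt

theorem isCompatible_lowSet_iff {j : ℕ} :
    IsCompatible (lowSet j φ) φ ↔ IsFoldAt j (shiftPerm φ) := by
  constructor
  · intro h
    refine ⟨fun x hx y hy hxy ↦ ?_, fun x hx y hy hxy ↦ ?_⟩ <;>
      obtain ⟨i, rfl⟩ := φ.surjective x <;> obtain ⟨k, rfl⟩ := φ.surjective y <;>
      rw [shiftPerm_apply, shiftPerm_apply]
    · exact h.anti i (mem_lowSet.2 hx) k (mem_lowSet.2 hy) hxy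
    · exact h.mono i (mt mem_lowSet.1 (not_lt.2 hx)) k (mt mem_lowSet.1 (not_lt.2 hy)) hxy
  · rintro ⟨hanti, hmono⟩
    constructor <;> intro i hi k hk <;> rw [mem_lowSet] at hi hk
    · exact Fin.lt_def.2 (hi.trans_le (not_lt.1 hk))
    · rw [← shiftPerm_apply, ← shiftPerm_apply]
      exact hanti hi hk
    · rw [← shiftPerm_apply, ← shiftPerm_apply]
      exact hmono (not_lt.1 hi) (not_lt.1 hk)

theorem isCompatible_iff :
    IsCompatible A φ ↔ IsFoldAt #A (shiftPerm φ) ∧ lowSet #A φ = A := by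
  rw [← isCompatible_lowSet_iff]
  refine ⟨fun h ↦ ⟨?_, h.lowSet_card⟩, fun ⟨h, hA⟩ ↦ ?_⟩
  · rwa [h.lowSet_card]
  · rwa [hA] at h

theorem sum_card_isCompatible {j : ℕ} (hj : j ≤ n) :
    ∑ A : Finset (ZMod n) with #A = j, Nat.card {φ // IsCompatible A φ} =
      Nat.card {φ : ZMod n ≃ Fin n // IsFoldAt j (shiftPerm φ)} := by
  classical
  rw [Nat.card_eq_fintype_card, Fintype.card_subtype,
    card_eq_sum_card_fiberwise (f := lowSet j)
      (t := {A : Finset (ZMod n) | #A = j}) fun φ _ ↦ by simp [card_lowSet hj]]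
  refine sum_congr rfl fun A hA ↦ ?_
  obtain rfl : #A = j := (mem_filter.1 hA).2
  simp only [isCompatible_iff, Nat.card_eq_fintype_card, Fintype.card_subtype, filter_filter]

theorem card_sum_eq_one_eq_card_isFoldAt {j : ℕ} (hj : j ≤ n) :
    #{A : Finset (ZMod n) | #A = j ∧ ∑ a ∈ A, a = 1} =
      Nat.card {σ : Equiv.Perm (Fin n) // IsCyclicPerm n σ ∧ IsFoldAt j σ} := by
  apply Nat.eq_of_mul_eq_mul_left (NeZero.pos n)
  rw [← card_shiftPerm (fun σ ↦ IsFoldAt j σ), ← sum_card_isCompatible hj, ← Nat.cast_inj (R := ℂ),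
    Nat.cast_mul, card_mul_card_sum_eq, Nat.cast_sum]
  simp only [card_isCompatible, mul_one]

end CyclicPermutations

section SubsetSums

theorem card_filter_card_eq_succ {G : Type*} [AddCommMonoid G] [Fintype G] [DecidableEq G]
    (j : ℕ) (r : G) :
    #{A : Finset G | #A = j + 1 ∧ ∑ a ∈ A, a = r} =
      #{A : Finset G | 0 ∉ A ∧ #A = j + 1 ∧ ∑ a ∈ A, a = r} +
        #{A : Finset G | 0 ∉ A ∧ #A = j ∧ ∑ a ∈ A, a = r} := by
  rw [← card_filter_add_card_filter_not (fun A : Finset G ↦ 0 ∉ A), filter_filter, filter_filter]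
  congr 1
  · simp only [and_comm]
  refine card_nbij' (fun A ↦ A.erase 0) (fun A ↦ insert 0 A) ?_ ?_ ?_ ?_ <;> intro A hA <;>
    simp only [coe_filter, mem_univ, true_and, Set.mem_ofPred_eq, not_not] at hA ⊢
  · obtain ⟨⟨hcard, hsum⟩, h0⟩ := hA
    rw [card_erase_of_mem h0, hcard, sum_erase A rfl]
    exact ⟨notMem_erase 0 A, rfl, hsum⟩
  · obtain ⟨h0, hcard, hsum⟩ := hA
    rw [card_insert_of_notMem h0, hcard, sum_insert h0, zero_add]
    exact ⟨⟨rfl, hsum⟩, mem_insert_self 0 A⟩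
  · exact insert_erase hA.2
  · exact erase_insert hA.1

theorem card_filter_card_eq_zero {G : Type*} [AddCommMonoid G] [Fintype G] [DecidableEq G]
    (r : G) :
    #{A : Finset G | #A = 0 ∧ ∑ a ∈ A, a = r} =
      #{A : Finset G | 0 ∉ A ∧ #A = 0 ∧ ∑ a ∈ A, a = r} := by
  congr 1
  ext A
  simp +contextual [card_eq_zero]

theorem image_val_erase_zero (n : ℕ) [NeZero n] :
    (univ.erase (0 : ZMod n)).image ZMod.val = Icc 1 (n - 1) := by
  ext x
  simp only [mem_image, mem_erase, mem_univ, and_true, mem_Icc]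
  constructor
  · rintro ⟨a, ha, rfl⟩
    have hpos := ZMod.val_pos.2 ha
    have hlt := a.val_lt
    omega
  · rintro ⟨h1, h2⟩
    have hval : (x : ZMod n).val = x := ZMod.val_cast_of_lt (by omega)
    refine ⟨x, fun h0 ↦ ?_, hval⟩
    rw [h0, ZMod.val_zero] at hval
    omega

theorem sCard_eq (n : ℕ) [NeZero n] (j r : ℕ) :
    SCard n j (r % n) = #{A : Finset (ZMod n) | 0 ∉ A ∧ #A = j ∧ ∑ a ∈ A, a = (r : ZMod n)} := by
  have hval := ZMod.val_injective n
  have hsum (A : Finset (ZMod n)) :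
      (∑ a ∈ A.image ZMod.val, a) % n = r % n ↔ ∑ a ∈ A, a = (r : ZMod n) := by
    rw [sum_image hval.injOn, ← ZMod.natCast_eq_natCast_iff', Nat.cast_sum]
    simp only [ZMod.natCast_zmod_val]
  rw [SCard, ← image_val_erase_zero, powerset_image, filter_image,
    card_image_of_injective _ (image_injective hval)]
  congr 1
  ext A
  simp only [mem_filter, mem_powerset, subset_erase, subset_univ, true_and, mem_univ, hsum,
    card_image_of_injective _ hval]

end SubsetSums

section VShapes

theorem strictAntiOn_Iic_iff_of_covBy {α β : Type*} [LinearOrder α] [Preorder β] {f : α → β}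
    {a b : α} (hab : a ⋖ b) :
    StrictAntiOn f (Set.Iic b) ↔ StrictAntiOn f (Set.Iic a) ∧ f b < f a := by
  rw [← Set.Iio_insert, hab.Iio_eq, strictAntiOn_insert_iff_of_forall_le
    fun x hx ↦ (Set.mem_Iic.1 hx).trans hab.le, and_comm]
  refine and_congr_right fun h ↦ ⟨fun hb ↦ hb a Set.self_mem_Iic hab.lt, fun hba x hx _ ↦ ?_⟩
  exact hba.trans_le (h.antitoneOn hx Set.self_mem_Iic hx)

theorem strictMonoOn_Ici_iff_of_covBy {α β : Type*} [LinearOrder α] [Preorder β] {f : α → β}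
    {a b : α} (hab : a ⋖ b) :
    StrictMonoOn f (Set.Ici a) ↔ StrictMonoOn f (Set.Ici b) ∧ f a < f b := by
  rw [← strictAntiOn_comp_ofDual_iff, ← strictAntiOn_comp_ofDual_iff]
  exact strictAntiOn_Iic_iff_of_covBy hab.toDual

variable {n : ℕ} {a b : Fin n} {σ : Equiv.Perm (Fin n)}

theorem isVShapedAt_iff :
    IsVShapedAt n (a + 1) σ ↔ StrictAntiOn σ (Set.Iic a) ∧ StrictMonoOn σ (Set.Ici a) := by
  refine and_congr ⟨fun h x _ y hy hxy ↦ h x y hxy (by simpa using hy), fun h x y hxy hy ↦ ?_⟩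
    ⟨fun h x hx y _ hxy ↦ h x y hxy (by simpa using hx), fun h x y hxy hx ↦ ?_⟩
  · have hya : y ≤ a := by simpa using hy
    exact h (hxy.le.trans hya) hya hxy
  · have hax : a ≤ x := by simpa using hx
    exact h hax (hax.trans hxy.le) hxy

theorem isFoldAt_iff_of_covBy (hab : a ⋖ b) :
    IsFoldAt (a + 1) σ ↔ StrictAntiOn σ (Set.Iic a) ∧ StrictMonoOn σ (Set.Ici b) := by
  have hIic : {x : Fin n | (x : ℕ) < a + 1} = Set.Iic a := by ext x; simp
  have hIci : {x : Fin n | (a + 1 : ℕ) ≤ x} = Set.Ici b := by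
    rw [← hab.Ioi_eq]
    ext x
    simp
  rw [IsFoldAt, hIic, hIci]

theorem isFoldAt_zero_iff : IsFoldAt 0 σ ↔ IsVShapedAt n 1 σ := by
  constructor
  · rintro ⟨-, h⟩
    exact ⟨fun i j hij hj ↦ by omega, fun i j hij _ ↦ h i.val.zero_le j.val.zero_le hij⟩
  · rintro ⟨-, h⟩
    exact ⟨fun x hx ↦ absurd hx x.val.not_lt_zero, fun x _ y _ hxy ↦ h x y hxy (by omega)⟩

theorem card_isFoldAt_of_covBy (hab : a ⋖ b) :
    Nat.card {σ : Equiv.Perm (Fin n) // IsCyclicPerm n σ ∧ IsFoldAt (a + 1) σ} =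
      Nat.card {σ // IsCyclicPerm n σ ∧ IsVShapedAt n (b + 1) σ} +
        Nat.card {σ // IsCyclicPerm n σ ∧ IsVShapedAt n (a + 1) σ} := by
  classical
  simp only [Nat.card_eq_fintype_card, Fintype.card_subtype]
  rw [← card_filter_add_card_filter_not (fun σ : Equiv.Perm (Fin n) ↦ σ b < σ a), filter_filter,
    filter_filter]
  congr 2 <;> ext σ <;>
    simp only [mem_filter, mem_univ, true_and, and_assoc, isFoldAt_iff_of_covBy hab,
      isVShapedAt_iff]
  · rw [strictAntiOn_Iic_iff_of_covBy hab]
    tauto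
  · have hne : σ a ≠ σ b := σ.injective.ne hab.ne
    rw [strictMonoOn_Ici_iff_of_covBy hab, not_lt, hne.le_iff_lt]

end VShapes

/-- The number of `(k-1)`-element subsets of `{1,…,n-1}` whose elements sum to
`1` mod `n` equals the number of cyclic V-shaped permutations of `{1,…,n}`
whose minimum is in position `k`. -/
theorem subset_sum_eq_cyclic_vshaped (n k : ℕ) (hn : 1 ≤ n) (hk1 : 1 ≤ k) (hkn : k ≤ n) :
    SCard n (k - 1) (1 % n) =
      Nat.card {σ : Equiv.Perm (Fin n) // IsCyclicPerm n σ ∧ IsVShapedAt n k σ} := by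
  have : NeZero n := ⟨by omega⟩
  obtain ⟨m, rfl⟩ := Nat.exists_eq_add_of_le' hk1
  rw [add_tsub_cancel_right, sCard_eq, Nat.cast_one]
  induction m with
  | zero =>
    rw [← card_filter_card_eq_zero, card_sum_eq_one_eq_card_isFoldAt (Nat.zero_le n)]
    simp only [isFoldAt_zero_iff]
  | succ m ih =>
    let a : Fin n := ⟨m, by omega⟩
    let b : Fin n := ⟨m + 1, by omega⟩
    have hab : a ⋖ b := Fin.covBy_iff.2 (Nat.covBy_iff_add_one_eq.2 rfl)
    have hcount := card_filter_card_eq_succ m (1 : ZMod n)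
    rw [card_sum_eq_one_eq_card_isFoldAt (by omega), card_isFoldAt_of_covBy hab,
      ← ih (by omega) (by omega)] at hcount
    exact (Nat.add_right_cancel hcount).symm
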